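/- Let (A¹, B¹) be an n₁×m₁ bimatrix game, (A², B²) an n₂×m₂ bimatrix game, and let (A, B) be their product game. If (x, y) is a Nash equilibrium of (A, B), then (x², y²) given by the marginals x² i = ∑ l : Fin n₁, x (l, i) and y² j = ∑ l : Fin m₁, y (l, j) is a Nash equilibrium of (A², B²). -/

import Mathlib

open Finset

/-- A mixed strategy: nonnegative and sums to 1. -/
def IsMixed {n : Type*} [Fintype n] (x : n → ℝ) : Prop :=
  (∀ i, 0 ≤ x i) ∧ ∑ i, x i = 1

/-- Expected payoff for the matrix `M` under strategies `x`, `y`. -/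
def payoff {n m : Type*} [Fintype n] [Fintype m] (M : Matrix n m ℝ)
    (x : n → ℝ) (y : m → ℝ) : ℝ :=
  ∑ i, ∑ j, x i * M i j * y j

/-- Nash equilibrium of the bimatrix game `(A, B)`. -/
def IsNash {n m : Type*} [Fintype n] [Fintype m] (A B : Matrix n m ℝ)
    (x : n → ℝ) (y : m → ℝ) : Prop :=
  IsMixed x ∧ IsMixed y ∧
  (∀ x', IsMixed x' → payoff A x' y ≤ payoff A x y) ∧
  (∀ y', IsMixed y' → payoff B x y' ≤ payoff B x y)

/-- The product game of two bimatrix games (one payoff matrix). -/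
def prodGame {n₁ m₁ n₂ m₂ : Type*} (M₁ : Matrix n₁ m₁ ℝ) (M₂ : Matrix n₂ m₂ ℝ) :
    Matrix (n₁ × n₂) (m₁ × m₂) ℝ :=
  fun p q => M₁ p.1 q.1 + M₂ p.2 q.2

/-- One payoff matrix of the sum game via constant `c` on the off-diagonal blocks. -/
def sumGame {n₁ m₁ n₂ m₂ : Type*} (M₁ : Matrix n₁ m₁ ℝ) (M₂ : Matrix n₂ m₂ ℝ)
    (c : ℝ) : Matrix (n₁ ⊕ n₂) (m₁ ⊕ m₂) ℝ :=
  fun i j => match i, j with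
    | Sum.inl i, Sum.inl j => M₁ i j
    | Sum.inr i, Sum.inr j => M₂ i j
    | _, _ => c

/-!
The payoff of a product game splits as the sum of the payoffs of the factors at the marginal
strategies. A player who replaces `x` by the independent product of its first marginal with `x'`
therefore keeps the payoff in the first factor while playing `x'` in the second, so a profitable
deviation in the second factor would be profitable in the product game.
-/

section Marginal

variable {ι κ : Type*}

/-- The marginal on the first factor of a strategy over pairs of pure strategies: the play it
induces in the first factor of a product game. -/
def marginalFst [Fintype κ] (x : ι × κ → ℝ) : ι → ℝ :=
  fun i => ∑ l, x (i, l)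

/-- The marginal on the second factor of a strategy over pairs of pure strategies: the play it
induces in the second factor of a product game. -/
def marginalSnd [Fintype ι] (x : ι × κ → ℝ) : κ → ℝ :=
  fun k => ∑ l, x (l, k)

/-- The independent product of two strategies, used to build deviations in a product game with
prescribed marginals. -/
def prodStrategy (x : ι → ℝ) (y : κ → ℝ) : ι × κ → ℝ :=
  fun p => x p.1 * y p.2

theorem marginalFst_prodStrategy [Fintype κ] (x : ι → ℝ) {y : κ → ℝ} (hy : ∑ k, y k = 1) :
    marginalFst (prodStrategy x y) = x := by
  funext i
  simp only [marginalFst, prodStrategy, ← mul_sum, hy, mul_one]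

theorem marginalSnd_prodStrategy [Fintype ι] {x : ι → ℝ} (y : κ → ℝ) (hx : ∑ i, x i = 1) :
    marginalSnd (prodStrategy x y) = y := by
  funext k
  simp only [marginalSnd, prodStrategy, ← sum_mul, hx, one_mul]

variable [Fintype ι] [Fintype κ]

theorem IsMixed.marginalFst {x : ι × κ → ℝ} (hx : IsMixed x) : IsMixed (marginalFst x) :=
  ⟨fun _ => sum_nonneg fun _ _ => hx.1 _, (Fintype.sum_prod_type x).symm.trans hx.2⟩

theorem IsMixed.marginalSnd {x : ι × κ → ℝ} (hx : IsMixed x) : IsMixed (marginalSnd x) :=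
  ⟨fun _ => sum_nonneg fun _ _ => hx.1 _, (Fintype.sum_prod_type_right x).symm.trans hx.2⟩

theorem IsMixed.prodStrategy {x : ι → ℝ} {y : κ → ℝ} (hx : IsMixed x) (hy : IsMixed y) :
    IsMixed (prodStrategy x y) := by
  refine ⟨fun p => mul_nonneg (hx.1 p.1) (hy.1 p.2), ?_⟩
  simp only [_root_.prodStrategy, ← Fintype.sum_mul_sum, Fintype.sum_prod_type, hx.2, hy.2, mul_one]

end Marginal

section Payoff

theorem prodGame_eq_submatrix_add_submatrix {n₁ m₁ n₂ m₂ : Type*}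
    (M₁ : Matrix n₁ m₁ ℝ) (M₂ : Matrix n₂ m₂ ℝ) :
    prodGame M₁ M₂ = M₁.submatrix Prod.fst Prod.fst + M₂.submatrix Prod.snd Prod.snd :=
  rfl

variable {n m n₁ m₁ n₂ m₂ : Type*} [Fintype n] [Fintype m]
  [Fintype n₁] [Fintype m₁] [Fintype n₂] [Fintype m₂]

theorem payoff_add (M N : Matrix n m ℝ) (x : n → ℝ) (y : m → ℝ) :
    payoff (M + N) x y = payoff M x y + payoff N x y := by
  simp only [payoff, Matrix.add_apply, mul_add, add_mul, sum_add_distrib]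

theorem payoff_submatrix_fst (M : Matrix n₁ m₁ ℝ) (x : n₁ × n₂ → ℝ) (y : m₁ × m₂ → ℝ) :
    payoff (M.submatrix Prod.fst Prod.fst) x y = payoff M (marginalFst x) (marginalFst y) := by
  simp only [payoff, marginalFst, Matrix.submatrix_apply, Fintype.sum_prod_type, sum_mul,
    ← mul_sum]
  exact sum_congr rfl fun _ _ => sum_comm

theorem payoff_submatrix_snd (M : Matrix n₂ m₂ ℝ) (x : n₁ × n₂ → ℝ) (y : m₁ × m₂ → ℝ) :
    payoff (M.submatrix Prod.snd Prod.snd) x y = payoff M (marginalSnd x) (marginalSnd y) := by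
  simp only [payoff, marginalSnd, Matrix.submatrix_apply, Fintype.sum_prod_type_right, sum_mul,
    ← mul_sum]
  exact sum_congr rfl fun _ _ => sum_comm

theorem payoff_prodGame (M₁ : Matrix n₁ m₁ ℝ) (M₂ : Matrix n₂ m₂ ℝ)
    (x : n₁ × n₂ → ℝ) (y : m₁ × m₂ → ℝ) :
    payoff (prodGame M₁ M₂) x y =
      payoff M₁ (marginalFst x) (marginalFst y) + payoff M₂ (marginalSnd x) (marginalSnd y) := by
  rw [prodGame_eq_submatrix_add_submatrix, payoff_add, payoff_submatrix_fst, payoff_submatrix_snd]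

theorem nash_of_product_marginal_snd_general
    {A₁ B₁ : Matrix n₁ m₁ ℝ} {A₂ B₂ : Matrix n₂ m₂ ℝ} {x : n₁ × n₂ → ℝ} {y : m₁ × m₂ → ℝ}
    (h : IsNash (prodGame A₁ A₂) (prodGame B₁ B₂) x y) :
    IsNash A₂ B₂ (marginalSnd x) (marginalSnd y) := by
  obtain ⟨hx, hy, hA, hB⟩ := h
  refine ⟨hx.marginalSnd, hy.marginalSnd, fun x' hx' => ?_, fun y' hy' => ?_⟩
  · have hdev := hA _ (hx.marginalFst.prodStrategy hx')
    rwa [payoff_prodGame, payoff_prodGame, marginalFst_prodStrategy _ hx'.2,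
      marginalSnd_prodStrategy _ hx.marginalFst.2, add_le_add_iff_left] at hdev
  · have hdev := hB _ (hy.marginalFst.prodStrategy hy')
    rwa [payoff_prodGame, payoff_prodGame, marginalFst_prodStrategy _ hy'.2,
      marginalSnd_prodStrategy _ hy.marginalFst.2, add_le_add_iff_left] at hdev

end Payoff

theorem nash_of_product_marginal_snd {n₁ m₁ n₂ m₂ : ℕ}
    (A₁ B₁ : Matrix (Fin n₁) (Fin m₁) ℝ) (A₂ B₂ : Matrix (Fin n₂) (Fin m₂) ℝ)
    (x : Fin n₁ × Fin n₂ → ℝ) (y : Fin m₁ × Fin m₂ → ℝ)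
    (h : IsNash (prodGame A₁ A₂) (prodGame B₁ B₂) x y) :
    IsNash A₂ B₂ (fun i => ∑ l : Fin n₁, x (l, i)) (fun j => ∑ l : Fin m₁, y (l, j)) :=
  nash_of_product_marginal_snd_general h
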